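/- arXiv:0907.4663 — 2 statements merged into one kernel-verified Lean document; each statement's English description precedes it below -/
import Mathlib

section
/- Let H be a real Hilbert space, S ⊆ H a closed linear subspace and C ⊆ H a nonempty closed convex subset such that Proj_C(S) ⊆ S. Then C ∩ S is nonempty, and for every x ∈ H the metric projection onto C ∩ S factors as Proj_{C∩S}(x) = Proj_C(Proj_S(x)). -/
open InnerProductSpace

/-- `p` is the metric projection of `x` onto the set `C`:
it belongs to `C` and is a nearest point of `C` to `x`. -/
def IsMetricProj {H : Type*} [NormedAddCommGroup H] (C : Set H) (x p : H) : Prop :=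
  p ∈ C ∧ ∀ y ∈ C, ‖x - p‖ ≤ ‖x - y‖

/-- If `S` is a closed linear subspace and `C` a nonempty closed convex subset of a real
Hilbert space such that the metric projection onto `C` maps `S` into `S`, then `C ∩ S` is
nonempty and the metric projection onto `C ∩ S` factors as `Proj_C ∘ Proj_S`. -/
theorem stmt0 {H : Type*} [NormedAddCommGroup H] [InnerProductSpace ℝ H] [CompleteSpace H]
    (S : Submodule ℝ H) (hScl : IsClosed (S : Set H))
    (C : Set H) (hCne : C.Nonempty) (hCcl : IsClosed C) (hCcv : Convex ℝ C)
    (projC : H → H) (hprojC : ∀ x, IsMetricProj C x (projC x))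
    (projS : H → H) (hprojS : ∀ x, IsMetricProj (S : Set H) x (projS x))
    (hCS : ∀ s ∈ S, projC s ∈ S) :
    (C ∩ (S : Set H)).Nonempty ∧
      ∀ x, IsMetricProj (C ∩ (S : Set H)) x (projC (projS x)) := by
  refine ⟨⟨projC 0, (hprojC 0).1, hCS 0 S.zero_mem⟩, fun x => ?_⟩
  have hs : projS x ∈ S := (hprojS x).1
  have hp : projC (projS x) ∈ S := hCS _ hs
  refine ⟨⟨(hprojC _).1, hp⟩, fun y hy => ?_⟩
  have hinf : ‖x - projS x‖ = ⨅ w : (S : Set H), ‖x - w‖ := by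
    haveI : Nonempty (S : Set H) := ⟨⟨0, S.zero_mem⟩⟩
    apply le_antisymm
    · exact le_ciInf fun w => (hprojS x).2 w w.2
    · exact ciInf_le (f := fun w : (S : Set H) => ‖x - w‖)
        ⟨0, Set.forall_mem_range.2 fun _ => norm_nonneg _⟩ ⟨projS x, hs⟩
  have horth := (S.norm_eq_iInf_iff_real_inner_eq_zero hs).1 hinf
  have pyth : ∀ z ∈ S, ‖x - z‖ * ‖x - z‖ =
      ‖x - projS x‖ * ‖x - projS x‖ + ‖projS x - z‖ * ‖projS x - z‖ := by
    intro z hz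
    rw [← norm_add_sq_eq_norm_sq_add_norm_sq_real (horth _ (S.sub_mem hs hz)),
      sub_add_sub_cancel]
  have h1 := pyth _ hp
  have h2 := pyth _ hy.2
  have h3 := (hprojC (projS x)).2 y hy.1
  refine abs_le_of_sq_le_sq' ?_ (norm_nonneg _) |>.2
  nlinarith [norm_nonneg (projS x - projC (projS x))]
end

section
/- If u ∈ 𝒰 is a.e. equal to a G-measurable function, then Proj_{𝒰^as}(u) is a.e. equal to a G-measurable function; that is, the metric projection onto the almost-sure constraint set maps the measurability subspace into itself: Proj_{𝒰^as}(𝒰^me) ⊆ 𝒰^me. -/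
open MeasureTheory

/-- Pointwise projection onto a nonempty closed convex set, with its Lipschitz property. -/
theorem aux_proj {E : Type*} [NormedAddCommGroup E] [InnerProductSpace ℝ E] [CompleteSpace E]
    (K : Set E) (hne : K.Nonempty) (hcl : IsClosed K) (hcv : Convex ℝ K) :
    ∃ f : E → E, (∀ x, f x ∈ K) ∧ (∀ x, ∀ y ∈ K, ‖x - f x‖ ≤ ‖x - y‖) ∧
      ∀ x y, ‖f x - f y‖ ≤ ‖x - y‖ := by
  choose f hf hfn using exists_norm_eq_iInf_of_complete_convex hne hcl.isComplete hcv
  have hin : ∀ x, ∀ w ∈ K, inner ℝ (x - f x) (w - f x) ≤ 0 := fun x =>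
    (norm_eq_iInf_iff_real_inner_le_zero hcv (hf x)).1 (hfn x)
  refine ⟨f, hf, ?_, ?_⟩
  · intro x y hy
    rw [hfn x]
    exact ciInf_le (f := fun w : K => ‖x - w‖)
      ⟨0, by rintro _ ⟨w, rfl⟩; exact norm_nonneg _⟩ ⟨y, hy⟩
  · intro x y
    have h1 := hin x (f y) (hf y)
    have h2 := hin y (f x) (hf x)
    have h3 : inner ℝ (f x - f y) (f x - f y) ≤ inner ℝ (x - y) (f x - f y) := by
      simp only [inner_sub_left, inner_sub_right] at *
      linarith
    have h4 := real_inner_le_norm (x - y) (f x - f y)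
    rw [real_inner_self_eq_norm_sq] at h3
    by_contra! h
    nlinarith [norm_nonneg (x - y)]

/-- Two metric projections onto a midpoint-closed set agree. -/
theorem aux_unique {H : Type*} [NormedAddCommGroup H] [InnerProductSpace ℝ H] (C : Set H)
    (x p q : H) (hp : IsMetricProj C x p) (hq : ‖x - q‖ ≤ ‖x - p‖)
    (hm : (1 / 2 : ℝ) • p + (1 / 2 : ℝ) • q ∈ C) : p = q := by
  have h1 := hp.2 _ hm
  have h2 := parallelogram_law_with_norm ℝ (x - p) (x - q)
  have e1 : x - p + (x - q) = (2 : ℝ) • (x - ((1 / 2 : ℝ) • p + (1 / 2 : ℝ) • q)) := by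
    module
  have e2 : x - p - (x - q) = q - p := by abel
  rw [e1, e2, norm_smul] at h2
  norm_num at h2
  norm_num at h1
  have h3 : ‖q - p‖ = 0 := by
    nlinarith [norm_nonneg (q - p), norm_nonneg (x - p), norm_nonneg (x - q)]
  exact (sub_eq_zero.1 (norm_eq_zero.1 h3)).symm

/-- The metric projection in `L²(Ω,F,P;ℝ^d)` onto the almost-sure constraint set
`𝒰^as = {u : u(ω) ∈ Γ a.s.}` maps the measurability subspace
`𝒰^me = {u : u is a.e. equal to a G-measurable function}` into itself:
if `u` is a.e. equal to a `G`-measurable function, so is `Proj_{𝒰^as}(u)`. -/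
theorem stmt5 {Ω : Type*} [F : MeasurableSpace Ω] (P : Measure Ω) [IsProbabilityMeasure P]
    (G : MeasurableSpace Ω) (hG : G ≤ F)
    (d : ℕ) (hd : 1 ≤ d) (Γ : Set (EuclideanSpace ℝ (Fin d)))
    (hΓne : Γ.Nonempty) (hΓcl : IsClosed Γ) (hΓcv : Convex ℝ Γ)
    (projU : Lp (EuclideanSpace ℝ (Fin d)) 2 P → Lp (EuclideanSpace ℝ (Fin d)) 2 P)
    (hprojU : ∀ u, IsMetricProj {v : Lp (EuclideanSpace ℝ (Fin d)) 2 P |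
        ∀ᵐ ω ∂P, v ω ∈ Γ} u (projU u))
    (u : Lp (EuclideanSpace ℝ (Fin d)) 2 P)
    (hu : ∃ g : Ω → EuclideanSpace ℝ (Fin d), Measurable[G] g ∧ ⇑u =ᵐ[P] g) :
    ∃ g : Ω → EuclideanSpace ℝ (Fin d), Measurable[G] g ∧ ⇑(projU u) =ᵐ[P] g := by
  obtain ⟨g, hg, hug⟩ := hu
  obtain ⟨f, hfK, hfmin, hflip⟩ := aux_proj Γ hΓne hΓcl hΓcv
  have hfc : Continuous f := by
    have : LipschitzWith 1 f := LipschitzWith.of_dist_le_mul (fun x y => by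
      simpa [dist_eq_norm] using hflip x y)
    exact this.continuous
  have hmem : MemLp (fun ω => f (u ω)) 2 P := by
    have hb : MemLp (fun ω => ‖u ω‖ + ‖f 0‖) 2 P :=
      (Lp.memLp u).norm.add (memLp_const _)
    refine hb.of_le (hfc.comp_aestronglyMeasurable (Lp.memLp u).1) (ae_of_all _ fun ω => ?_)
    have h1 := hflip (u ω) 0
    have h2 := norm_le_norm_add_norm_sub (f 0) (f (u ω))
    rw [sub_zero] at h1
    rw [Real.norm_of_nonneg (by positivity)]
    have h3 := norm_sub_rev (f 0) (f (u ω))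
    linarith
  set v := hmem.toLp _ with hv
  have hvc : ⇑v =ᵐ[P] fun ω => f (u ω) := hmem.coeFn_toLp
  have hp := hprojU u
  have hpm : ∀ᵐ ω ∂P, projU u ω ∈ Γ := hp.1
  have heq : projU u = v := by
    refine aux_unique _ u _ v hp ?_ ?_
    · apply Lp.norm_le_norm_of_ae_le
      filter_upwards [hvc, hpm, Lp.coeFn_sub u v, Lp.coeFn_sub u (projU u)] with ω h1 h2 h3 h4
      rw [h3, h4, Pi.sub_apply, Pi.sub_apply, h1]
      exact hfmin _ _ h2
    · show ∀ᵐ ω ∂P, _ ∈ Γ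
      filter_upwards [hvc, hpm, Lp.coeFn_add ((1 / 2 : ℝ) • projU u) ((1 / 2 : ℝ) • v),
        Lp.coeFn_smul (1 / 2 : ℝ) (projU u), Lp.coeFn_smul (1 / 2 : ℝ) v] with ω h1 h2 h3 h4 h5
      rw [h3, Pi.add_apply, h4, h5, Pi.smul_apply, Pi.smul_apply, h1]
      exact hΓcv h2 (hfK _) (by norm_num) (by norm_num) (by norm_num)
  refine ⟨fun ω => f (g ω), hfc.measurable.comp hg, ?_⟩
  rw [heq]
  filter_upwards [hvc, hug] with ω h1 h2
  rw [h1, h2]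
end
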